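/- arXiv:2203.02070 — 4 statements merged into one kernel-verified Lean document; each statement's English description precedes it below -/
import Mathlib

section
/- Let R be a commutative integral domain, let n ≥ 1, and let F and G be nonzero Laurent polynomials in n variables over R. Then the Newton polytope of the product F·G equals the Minkowski sum of the Newton polytopes of F and G: Δ(F·G) = Δ(F) + Δ(G), where + denotes the Minkowski sum {v₁ + v₂ : v₁ ∈ Δ(F), v₂ ∈ Δ(G)} of subsets of ℝⁿ. -/
open scoped Pointwise

noncomputable section

/-- The coordinatewise embedding of `ℤⁿ` into `ℝⁿ`. -/
def emb (n : ℕ) : (Fin n → ℤ) → (Fin n → ℝ) := fun u i => (u i : ℝ)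

/-- The Newton polytope of a Laurent polynomial `F` in `n` variables over `R`:
the convex hull in `ℝⁿ` of the (finite) set of exponents `u ∈ ℤⁿ` at which the
coefficient `[F]_u` is nonzero. -/
def newton {R : Type*} [CommSemiring R] {n : ℕ} (F : AddMonoidAlgebra R (Fin n → ℤ)) :
    Set (Fin n → ℝ) :=
  convexHull ℝ (emb n '' {u | F.coeff u ≠ 0})

/-- The embedding is additive. -/
lemma emb_add (n : ℕ) (u v : Fin n → ℤ) : emb n (u + v) = emb n u + emb n v := by
  funext i; simp [emb]

/-- For a commutative integral domain `R`, `n ≥ 1`, and nonzero Laurent polynomials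
`F, G ∈ R[x₁,x₁⁻¹,…,xₙ,xₙ⁻¹]`, the Newton polytope of `F·G` is the Minkowski sum of the
Newton polytopes of `F` and `G`. -/
theorem newton_mul {R : Type*} [CommRing R] [IsDomain R] {n : ℕ} (hn : 1 ≤ n)
    (F G : AddMonoidAlgebra R (Fin n → ℤ)) (hF : F ≠ 0) (hG : G ≠ 0) :
    newton (F * G) = newton F + newton G := by
  classical
  unfold newton
  rw [← convexHull_add]
  apply Set.Subset.antisymm
  · apply convexHull_mono
    rintro _ ⟨u, hu, rfl⟩
    have h := AddMonoidAlgebra.support_coeff_mul_subset F G (Finsupp.mem_support_iff.2 hu)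
    obtain ⟨a, ha, b, hb, rfl⟩ := Finset.mem_add.1 h
    rw [emb_add]
    exact Set.add_mem_add ⟨a, Finsupp.mem_support_iff.1 ha, rfl⟩
      ⟨b, Finsupp.mem_support_iff.1 hb, rfl⟩
  · apply convexHull_min _ (convex_convexHull ℝ _)
    rintro _ ⟨_, ⟨a, ha, rfl⟩, _, ⟨b, hb, rfl⟩, rfl⟩
    by_contra hnot
    have hfin : (emb n '' {u | (F * G).coeff u ≠ 0}).Finite :=
      ((F * G).coeff.hasFiniteSupport).image _
    obtain ⟨f, c, hlt, hgt⟩ := geometric_hahn_banach_closed_point (convex_convexHull ℝ _)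
      (hfin.isCompact_convexHull (𝕜 := ℝ)).isClosed hnot
    have ha' : a ∈ F.coeff.support := Finsupp.mem_support_iff.2 ha
    have hb' : b ∈ G.coeff.support := Finsupp.mem_support_iff.2 hb
    obtain ⟨p, hp, hpm⟩ := Finset.exists_max_image F.coeff.support (fun u => f (emb n u)) ⟨a, ha'⟩
    obtain ⟨q, hq, hqm⟩ := Finset.exists_max_image G.coeff.support (fun u => f (emb n u)) ⟨b, hb'⟩
    obtain ⟨x, hx, y, hy, hxy⟩ := UniqueSums.uniqueAdd_of_nonempty
      (A := F.coeff.support.filter (fun u => f (emb n u) = f (emb n p)))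
      (B := G.coeff.support.filter (fun u => f (emb n u) = f (emb n q)))
      ⟨p, by simpa using hp⟩ ⟨q, by simpa using hq⟩
    rw [Finset.mem_filter] at hx hy
    have key : UniqueAdd F.coeff.support G.coeff.support x y := by
      intro s t hs ht hst
      have h1 := hpm s hs
      have h2 := hqm t ht
      have h3 : f (emb n s) + f (emb n t) = f (emb n x) + f (emb n y) := by
        rw [← map_add, ← map_add, ← emb_add, ← emb_add, hst]
      have h4 := hx.2
      have h5 := hy.2
      exact hxy (Finset.mem_filter.2 ⟨hs, by linarith⟩) (Finset.mem_filter.2 ⟨ht, by linarith⟩) hst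
    have hne : (F * G).coeff (x + y) ≠ 0 := by
      rw [AddMonoidAlgebra.coeff_mul_add_of_uniqueAdd key]
      exact mul_ne_zero (Finsupp.mem_support_iff.1 hx.1) (Finsupp.mem_support_iff.1 hy.1)
    have h6 := hlt _ (subset_convexHull ℝ _ ⟨x + y, hne, rfl⟩)
    have h1 := hpm a ha'
    have h2 := hqm b hb'
    have h4 := hx.2
    have h5 := hy.2
    simp only [emb_add, map_add] at h6 hgt h1 h2
    linarith
end
end

section
/- For every H ∈ ℤ_q[x^±] and every integer m ≥ 1, one has A_H^m = ψ^m ∘ T_{H^{(m)}}; that is, for every G ∈ ℤ_q[x^±], applying A_H m times to G yields the same result as ψ applied m times to H^{(m)}·G. -/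
open WittVector

noncomputable section

variable (p : ℕ) [Fact p.Prime] (a n : ℕ)

/-- The finite field `𝔽_q` with `q = p^a` elements. -/
abbrev Fq := GaloisField p a

/-- The ring `ℤ_q` of `p`-typical Witt vectors of `𝔽_q`. -/
abbrev Zq := WittVector p (Fq p a)

/-- The Witt-vector Frobenius automorphism `φ` of `ℤ_q`. -/
def φW : Zq p a ≃+* Zq p a := WittVector.frobeniusEquiv p (Fq p a)

/-- The ring `ℤ_q[x^±]` of Laurent polynomials in `n` variables over `ℤ_q`. -/
abbrev LP := AddMonoidAlgebra (Zq p a) (Fin n → ℤ)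

/-- The map `φ` on Laurent polynomials: `φ(G) = Σ_u φ([G]_u) x^{pu}`. -/
def φL (G : LP p a n) : LP p a n :=
  Finsupp.sum G.coeff fun u c => AddMonoidAlgebra.single ((p : ℤ) • u) (φW p a c)

/-- The map `ψ` on Laurent polynomials: `ψ(G) = Σ_u φ⁻¹([G]_{pu}) x^u`. -/
def ψL (G : LP p a n) : LP p a n :=
  AddMonoidAlgebra.ofCoeff <| Finsupp.mapRange (φW p a).symm (map_zero _)
    (Finsupp.comapDomain (fun u : Fin n → ℤ => (p : ℤ) • u) G.coeff
      ((smul_right_injective (Fin n → ℤ)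
        (by exact_mod_cast (Fact.out : p.Prime).ne_zero)).injOn))

/-- The operator `A_H = ψ ∘ T_{H^{p-1}}`, where `T_H` is multiplication by `H`. -/
def A (H : LP p a n) (G : LP p a n) : LP p a n := ψL p a n (H ^ (p - 1) * G)


/-- `H^{(m)} = (H · φ(H) ⋯ φ^{m-1}(H))^{p-1}`. -/
def Hm (H : LP p a n) (m : ℕ) : LP p a n :=
  ((Finset.range m).prod fun i => (φL p a n)^[i] H) ^ (p - 1)


/-- `φL` as a ring homomorphism. -/
def φR : LP p a n →+* LP p a n :=
  (AddMonoidAlgebra.mapDomainRingHom (Zq p a)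
    (zsmulAddGroupHom (p : ℤ) : (Fin n → ℤ) →+ (Fin n → ℤ))).comp
    (AddMonoidAlgebra.mapRingHom (Fin n → ℤ) ((φW p a : Zq p a ≃+* Zq p a) : Zq p a →+* Zq p a))

theorem φL_add (F G : LP p a n) : φL p a n (F + G) = φL p a n F + φL p a n G := by
  unfold φL
  rw [AddMonoidAlgebra.coeff_add]
  exact Finsupp.sum_add_index' (by simp) (by simp)

theorem φL_zero : φL p a n 0 = 0 := by
  simp [φL]

theorem φL_single (u : Fin n → ℤ) (c : Zq p a) :
    φL p a n (AddMonoidAlgebra.single u c) =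
      AddMonoidAlgebra.single ((p : ℤ) • u) (φW p a c) := by
  unfold φL
  rw [AddMonoidAlgebra.coeff_single]
  exact Finsupp.sum_single_index (by simp)

theorem φL_eq (G : LP p a n) : φL p a n G = φR p a n G := by
  induction G using AddMonoidAlgebra.induction_linear with
  | zero => rw [φL_zero, map_zero]
  | add F G hF hG => rw [φL_add, map_add, hF, hG]
  | single u c =>
    rw [φL_single]
    simp [φR]

theorem ψL_coeff (G : LP p a n) (u : Fin n → ℤ) :
    (ψL p a n G).coeff u = (φW p a).symm (G.coeff ((p : ℤ) • u)) := rfl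

theorem ψL_add (F G : LP p a n) : ψL p a n (F + G) = ψL p a n F + ψL p a n G := by
  ext1
  ext1 u
  rw [AddMonoidAlgebra.coeff_add, Finsupp.add_apply, ψL_coeff, ψL_coeff, ψL_coeff,
    AddMonoidAlgebra.coeff_add, Finsupp.add_apply, map_add]

theorem ψL_zero : ψL p a n 0 = 0 := by
  ext1
  ext1 u
  rw [ψL_coeff]
  simp

/-- The projection formula. -/
theorem ψL_φL_mul (F G : LP p a n) : ψL p a n (φL p a n F * G) = F * ψL p a n G := by
  induction F using AddMonoidAlgebra.induction_linear with
  | zero => rw [φL_zero, zero_mul, zero_mul, ψL_zero]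
  | add F F' hF hF' => rw [φL_add, add_mul, add_mul, ψL_add, hF, hF']
  | single u c =>
    rw [φL_single]
    ext1
    ext1 w
    rw [ψL_coeff, AddMonoidAlgebra.coeff_single_mul_apply,
      AddMonoidAlgebra.coeff_single_mul_apply, ψL_coeff, map_mul, RingEquiv.symm_apply_apply,
      smul_add, smul_neg]

theorem ψL_iterate_mul (m : ℕ) (F G : LP p a n) :
    (ψL p a n)^[m] ((φL p a n)^[m] F * G) = F * (ψL p a n)^[m] G := by
  induction m generalizing G with
  | zero => rfl
  | succ m ih =>
    rw [Function.iterate_succ_apply, Function.iterate_succ_apply' (φL p a n), ψL_φL_mul, ih,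
      Function.iterate_succ_apply]

theorem φL_iterate_pow (m k : ℕ) (F : LP p a n) :
    (φL p a n)^[m] (F ^ k) = ((φL p a n)^[m] F) ^ k := by
  induction m with
  | zero => rfl
  | succ m ih =>
    rw [Function.iterate_succ_apply', Function.iterate_succ_apply', ih, φL_eq, φL_eq, map_pow]

/-- For every `H ∈ ℤ_q[x^±]` and every `m ≥ 1`, one has `A_H^m = ψ^m ∘ T_{H^{(m)}}`:
applying `A_H` `m` times to any `G` equals applying `ψ` `m` times to `H^{(m)}·G`. -/
theorem A_iterate_eq (ha : 1 ≤ a) (hn : 1 ≤ n) (H : LP p a n) (m : ℕ) (hm : 1 ≤ m)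
    (G : LP p a n) :
    (A p a n H)^[m] G = (ψL p a n)^[m] (Hm p a n H m * G) := by
  clear hm
  induction m with
  | zero => simp [Hm]
  | succ m ih =>
    rw [Function.iterate_succ_apply', ih, Function.iterate_succ_apply', A, ← ψL_iterate_mul,
      φL_iterate_pow, ← mul_assoc, Hm, Hm, ← mul_pow, Finset.prod_range_succ,
      mul_comm ((φL p a n)^[m] H)]
end
end

section
/- Let K ⊆ ℝⁿ be a convex polytope with integral vertices (i.e., the convex hull of a finite set of points of ℤⁿ) and let H ∈ ℤ_q[x^±] satisfy Δ(H) ⊆ K. If G ∈ ℤ_q[x^±] has all of its exponents in K ∩ ℤⁿ (i.e., [G]_u = 0 whenever u ∉ K), then A_H(G) also has all of its exponents in K ∩ ℤⁿ. In other words, A_H maps the ℤ_q-submodule P_K = ⊕_{u ∈ K ∩ ℤⁿ} ℤ_q·x^u into itself. -/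
open WittVector

noncomputable section

variable (p : ℕ) [Fact p.Prime] (a n : ℕ)

open scoped Pointwise

theorem coeff_mul_exists_aux {R : Type*} [CommSemiring R] {n : ℕ}
    (F G : AddMonoidAlgebra R (Fin n → ℤ)) (u : Fin n → ℤ) (h : (F * G).coeff u ≠ 0) :
    ∃ v w, v + w = u ∧ F.coeff v ≠ 0 ∧ G.coeff w ≠ 0 := by
  classical
  have h1 := AddMonoidAlgebra.support_coeff_mul_subset F G (Finsupp.mem_support_iff.2 h)
  obtain ⟨v, hv, w, hw, rfl⟩ := Finset.mem_add.1 h1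
  exact ⟨v, w, rfl, Finsupp.mem_support_iff.1 hv, Finsupp.mem_support_iff.1 hw⟩

theorem coeff_pow_mul_aux {R : Type*} [CommSemiring R] {n : ℕ} {K : Set (Fin n → ℝ)}
    (hK : Convex ℝ K) (H G : AddMonoidAlgebra R (Fin n → ℤ))
    (hH : ∀ u, H.coeff u ≠ 0 → emb n u ∈ K) (hG : ∀ u, G.coeff u ≠ 0 → emb n u ∈ K) (k : ℕ) :
    ∀ u, (H ^ k * G).coeff u ≠ 0 → emb n u ∈ ((k : ℝ) + 1) • K := by
  induction k with
  | zero => intro u hu; simpa using hG u (by simpa using hu)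
  | succ k ih =>
    intro u hu
    rw [pow_succ', mul_assoc] at hu
    obtain ⟨v, w, rfl, hv, hw⟩ := coeff_mul_exists_aux _ _ _ hu
    have e : emb n (v + w) = emb n w + emb n v := by
      funext i; simp [emb, add_comm]
    rw [e, Nat.cast_succ, hK.add_smul (by positivity) zero_le_one, one_smul]
    exact Set.add_mem_add (ih w hw) (hH v hv)

/-- Let `K ⊆ ℝⁿ` be a convex polytope with integral vertices (the convex hull of a finite
set `S ⊆ ℤⁿ`) and `H ∈ ℤ_q[x^±]` with `Δ(H) ⊆ K`.  If `G` has all its exponents in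
`K ∩ ℤⁿ` (i.e. `[G]_u = 0` whenever `u ∉ K`), then so does `A_H(G)`; that is, `A_H` maps
`P_K` into itself. -/
theorem A_maps_PK_to_PK (ha : 1 ≤ a) (hn : 1 ≤ n) (S : Finset (Fin n → ℤ))
    (H : LP p a n) (hH : newton H ⊆ convexHull ℝ (emb n '' (S : Set (Fin n → ℤ))))
    (G : LP p a n)
    (hG : ∀ u : Fin n → ℤ, emb n u ∉ convexHull ℝ (emb n '' (S : Set (Fin n → ℤ))) → G.coeff u = 0) :
    ∀ v : Fin n → ℤ, emb n v ∉ convexHull ℝ (emb n '' (S : Set (Fin n → ℤ))) →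
      (A p a n H G).coeff v = 0 := by
  intro v hv
  by_contra hne
  apply hv
  have hp : p ≠ 0 := (Fact.out : p.Prime).ne_zero
  have hcoef : (H ^ (p - 1) * G).coeff ((p : ℤ) • v) ≠ 0 := by
    intro h0
    apply hne
    change (φW p a).symm ((H ^ (p - 1) * G).coeff ((p : ℤ) • v)) = 0
    rw [h0, map_zero]
  have key := coeff_pow_mul_aux (convex_convexHull ℝ (emb n '' (S : Set (Fin n → ℤ)))) H G
    (fun u hu => hH (subset_convexHull ℝ _ ⟨u, hu, rfl⟩))
    (fun u hu => by_contra fun h => hu (hG u h)) (p - 1) _ hcoef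
  have hc : ((p - 1 : ℕ) : ℝ) + 1 = p := by
    exact_mod_cast Nat.sub_add_cancel (Nat.one_le_iff_ne_zero.2 hp)
  have e : emb n ((p : ℤ) • v) = (p : ℝ) • emb n v := by
    funext i; simp [emb]
  rw [hc, e] at key
  exact (Set.smul_mem_smul_set_iff₀ (Nat.cast_ne_zero.2 hp) _ _).1 key
end
end

section
/- Let K ⊆ ℝⁿ be a convex polytope with integral vertices, let F ∈ ℤ_q[x^±] satisfy Δ(F) ⊆ K, and let s ≥ 1. Let B be the finite set (sK) ∩ ℤⁿ and define the square matrix M_s, with rows and columns indexed by B, by (M_s)_{v,u} = [F^{(p−1)s}]_{pv−u} for u, v ∈ B. Then for every u ∈ B: (i) the coefficient [A_{F^s}^a(x^u)]_v is zero for every v ∈ ℤⁿ ∖ B, and (ii) for every v ∈ B, the coefficient [A_{F^s}^a(x^u)]_v equals the (v,u) entry of the matrix product φ^{a−1}(M_s)·φ^{a−2}(M_s)⋯φ(M_s)·M_s, where φ acts entrywise on matrices. That is, the matrix of the ℤ_q-linear operator A_{F^s}^a on P_{sK} with respect to the monomial basis {x^u : u ∈ B} is φ^{a−1}(M_s)⋯φ(M_s)·M_s.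 -/
open WittVector

noncomputable section

variable (p : ℕ) [Fact p.Prime] (a n : ℕ)

open scoped Pointwise

/-- The matrix `M_s` with rows and columns indexed by `B = (sK) ∩ ℤⁿ`, given by
`(M_s)_{v,u} = [F^{(p−1)s}]_{pv−u}`. -/
def Ms (F : LP p a n) (s : ℕ) (B : Finset (Fin n → ℤ)) : Matrix B B (Zq p a) :=
  fun v u => (F ^ ((p - 1) * s)).coeff ((p : ℤ) • (v : Fin n → ℤ) - (u : Fin n → ℤ))

/-- The matrix product `φ^{a−1}(M) ⋯ φ(M) · M`, where `φ` acts entrywise. -/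
def Φmat (B : Finset (Fin n → ℤ)) (M : Matrix B B (Zq p a)) : Matrix B B (Zq p a) :=
  (((List.range a).reverse).map fun i => M.map fun x => (⇑(φW p a))^[i] x).prod

theorem aux_coeff_mul (H G : LP p a n) (g : Fin n → ℤ) :
    (H * G).coeff g = G.coeff.sum fun h c => H.coeff (g - h) * c := by
  have := AddMonoidAlgebra.coeff_mul_apply_right H G g
  simpa [sub_eq_add_neg] using this

theorem aux_A_coeff (H G : LP p a n) (v : Fin n → ℤ) :
    (A p a n H G).coeff v =
      (φW p a).symm (G.coeff.sum fun h c => (H ^ (p - 1)).coeff ((p : ℤ) • v - h) * c) := by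
  rw [← aux_coeff_mul]
  rfl

theorem aux_frob (ha : 1 ≤ a) (x : Zq p a) : (⇑(φW p a))^[a] x = x := by
  have h : ∀ (k : ℕ) (x : Zq p a) (m : ℕ),
      ((⇑(φW p a))^[k] x).coeff m = x.coeff m ^ p ^ k := by
    intro k
    induction k with
    | zero => intro x m; simp
    | succ k ih =>
      intro x m
      rw [Function.iterate_succ_apply, ih]
      have : (φW p a x).coeff m = x.coeff m ^ p := WittVector.coeff_frobenius_charP p x m
      rw [this, ← pow_mul, pow_succ']
  ext m
  rw [h]
  have : Fintype (Fq p a) := Fintype.ofFinite _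
  have hc : Fintype.card (Fq p a) = p ^ a := by
    rw [← Nat.card_eq_fintype_card]; exact GaloisField.card p a (by omega)
  rw [← hc]
  exact FiniteField.pow_card _

theorem aux_support (F : LP p a n) (K : Set (Fin n → ℝ)) (hK : Convex ℝ K) (hne : K.Nonempty)
    (hF : ∀ u, F.coeff u ≠ 0 → emb n u ∈ K) (m : ℕ) :
    ∀ w, (F ^ m).coeff w ≠ 0 → emb n w ∈ (m : ℝ) • K := by
  induction m with
  | zero =>
    intro w hw
    have hw0 : w = 0 := by
      by_contra h
      apply hw
      rw [pow_zero, AddMonoidAlgebra.one_def, AddMonoidAlgebra.coeff_single,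
        Finsupp.single_eq_of_ne h]
    subst hw0
    obtain ⟨k, hk⟩ := hne
    refine ⟨k, hk, ?_⟩
    ext i
    simp [emb]
  | succ m ih =>
    intro w hw
    rw [pow_succ, aux_coeff_mul] at hw
    obtain ⟨h, _, hh⟩ := Finset.exists_ne_zero_of_sum_ne_zero hw
    have h1 := ih _ (left_ne_zero_of_mul hh)
    have h2 := hF _ (right_ne_zero_of_mul hh)
    rw [Nat.cast_succ, hK.add_smul (Nat.cast_nonneg m) zero_le_one, one_smul]
    refine ⟨_, h1, _, h2, ?_⟩
    ext i
    simp [emb]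

theorem aux_stable (F : LP p a n) (K : Set (Fin n → ℝ)) (hK : Convex ℝ K)
    (hF : ∀ u, F.coeff u ≠ 0 → emb n u ∈ K) (s : ℕ) (u v : Fin n → ℤ)
    (hu : emb n u ∈ (s : ℝ) • K)
    (h : (F ^ ((p - 1) * s)).coeff ((p : ℤ) • v - u) ≠ 0) : emb n v ∈ (s : ℝ) • K := by
  have hp : 0 < p := (Fact.out : p.Prime).pos
  have hne : K.Nonempty := by
    obtain ⟨k, hk, _⟩ := hu
    exact ⟨k, hk⟩
  have h1 := aux_support p a n F K hK hne hF _ _ h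
  have h2 : emb n ((p : ℤ) • v - u) + emb n u ∈ ((((p - 1) * s : ℕ) : ℝ) + s) • K := by
    rw [hK.add_smul (Nat.cast_nonneg _) (Nat.cast_nonneg _)]
    exact Set.add_mem_add h1 hu
  have h3 : ((((p - 1) * s : ℕ) : ℝ) + s) = (p : ℝ) * s := by
    rw [Nat.cast_mul, Nat.cast_sub hp]; push_cast; ring
  have h4 : emb n ((p : ℤ) • v - u) + emb n u = (p : ℝ) • emb n v := by
    ext i
    simp [emb]
  rw [h3, h4, mul_smul] at h2
  have hp' : (p : ℝ) ≠ 0 := by exact_mod_cast hp.ne'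
  exact (Set.smul_mem_smul_set_iff₀ hp' _ _).1 h2

theorem aux_main (F : LP p a n) (s : ℕ) (B : Finset (Fin n → ℤ))
    (hst : ∀ u ∈ B, ∀ v, v ∉ B → (F ^ ((p - 1) * s)).coeff ((p : ℤ) • v - u) = 0)
    (u : Fin n → ℤ) (hu : u ∈ B) (k : ℕ) :
    (∀ v, v ∉ B → ((A p a n (F ^ s))^[k] (AddMonoidAlgebra.single u 1)).coeff v = 0) ∧
    (∀ v : B, (⇑(φW p a))^[k]
        (((A p a n (F ^ s))^[k] (AddMonoidAlgebra.single u 1)).coeff v) =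
      (((List.range k).reverse).map fun i =>
        (Ms p a n F s B).map fun x => (⇑(φW p a))^[i] x).prod v ⟨u, hu⟩) := by
  induction k with
  | zero =>
    constructor
    · intro v hv
      have : v ≠ u := by rintro rfl; exact hv hu
      simp [Finsupp.single_eq_of_ne this]
    · intro v
      by_cases h : v = ⟨u, hu⟩
      · subst h; simp
      · have h' : (v : Fin n → ℤ) ≠ u := fun e => h (Subtype.ext e)
        simp [Finsupp.single_eq_of_ne h', Matrix.one_apply_ne h]
  | succ k ih =>
    obtain ⟨ih1, ih2⟩ := ih
    rw [Function.iterate_succ_apply']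
    set G := (A p a n (F ^ s))^[k] (AddMonoidAlgebra.single u 1) with hG
    have hA : ∀ v, (A p a n (F ^ s) G).coeff v = (φW p a).symm
        (∑ h ∈ B, (F ^ ((p - 1) * s)).coeff ((p : ℤ) • v - h) * G.coeff h) := by
      intro v
      rw [aux_A_coeff, ← pow_mul, mul_comm s]
      congr 1
      apply Finsupp.sum_of_support_subset
      · intro h hh
        by_contra hc
        exact (Finsupp.mem_support_iff.1 hh) (ih1 h hc)
      · simp
    constructor
    · intro v hv
      rw [hA, Finset.sum_eq_zero, map_zero]
      intro h hh
      rw [hst h hh v hv, zero_mul]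
    · intro v
      rw [hA, Function.iterate_succ_apply, RingEquiv.apply_symm_apply, List.range_succ,
        List.reverse_append, List.reverse_singleton, List.singleton_append, List.map_cons,
        List.prod_cons, Matrix.mul_apply, ← Finset.sum_coe_sort B]
      have e : (⇑(φW p a))^[k] = ⇑((φW p a : Zq p a →+* Zq p a) ^ k) := by
        rw [RingHom.coe_pow]; rfl
      rw [e, map_sum]
      refine Finset.sum_congr rfl fun w _ => ?_
      rw [← ih2 w, map_mul, ← e]
      rfl

/-- Let `K` be a convex polytope with integral vertices, `F ∈ ℤ_q[x^±]` with `Δ(F) ⊆ K`,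
`s ≥ 1`, and `B = (sK) ∩ ℤⁿ`.  Then for each `u ∈ B`: (i) `[A_{F^s}^a(x^u)]_v = 0` for all
`v ∈ ℤⁿ ∖ B`, and (ii) for `v ∈ B`, `[A_{F^s}^a(x^u)]_v` is the `(v,u)` entry of
`φ^{a−1}(M_s) ⋯ φ(M_s) · M_s`; i.e. this matrix is the matrix of `A_{F^s}^a` on `P_{sK}`
with respect to the monomial basis. -/
theorem matrix_of_A (ha : 1 ≤ a) (hn : 1 ≤ n) (S : Finset (Fin n → ℤ)) (F : LP p a n)
    (hF : newton F ⊆ convexHull ℝ (emb n '' (S : Set (Fin n → ℤ)))) (s : ℕ) (hs : 1 ≤ s)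
    (B : Finset (Fin n → ℤ))
    (hB : ∀ u : Fin n → ℤ,
      u ∈ B ↔ emb n u ∈ (s : ℝ) • convexHull ℝ (emb n '' (S : Set (Fin n → ℤ)))) :
    (∀ u ∈ B, ∀ v : Fin n → ℤ, v ∉ B →
        ((A p a n (F ^ s))^[a] (AddMonoidAlgebra.single u 1)).coeff v = 0) ∧
    (∀ (u v : Fin n → ℤ) (hu : u ∈ B) (hv : v ∈ B),
        ((A p a n (F ^ s))^[a] (AddMonoidAlgebra.single u 1)).coeff v =
          Φmat p a n B (Ms p a n F s B) ⟨v, hv⟩ ⟨u, hu⟩) := by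
  have hst : ∀ u ∈ B, ∀ v, v ∉ B → (F ^ ((p - 1) * s)).coeff ((p : ℤ) • v - u) = 0 := by
    intro u hu v hv
    by_contra h
    refine hv ((hB v).2 (aux_stable p a n F _ (convex_convexHull ℝ _) ?_ s u v ((hB u).1 hu) h))
    intro w hw
    exact hF (subset_convexHull ℝ _ ⟨w, hw, rfl⟩)
  refine ⟨fun u hu v hv => (aux_main p a n F s B hst u hu a).1 v hv, fun u v hu hv => ?_⟩
  have := (aux_main p a n F s B hst u hu a).2 ⟨v, hv⟩
  rw [aux_frob p a ha] at this
  exact this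
end
end
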